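/- Let F_q be a finite field of characteristic three, let σ ∈ F_q be a nonsquare, and let n > 1 be an integer. Then |𝓘(x^3 − σx, 1, n, q)| = (1/(3 n_3)) I(n/(2 n_3), q^{2 n_3}); in particular this cardinality is 0 when n/n_3 is odd. -/

import Mathlib

open Polynomial

/-- The transform `f_R` of a nonzero polynomial `f` by the rational expression `R = g/h`. -/
noncomputable def ratTransform {K : Type*} [Field K] (g h f : K[X]) : K[X] :=
  ∑ i ∈ Finset.range (f.natDegree + 1), C (f.coeff i) * g ^ i * h ^ (f.natDegree - i)

/-- `𝓘(g,h,n,q)`: the set of monic irreducible polynomials `f` of degree `n` over the field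
such that `f_R` is irreducible. -/
noncomputable def IrredSet {K : Type*} [Field K] (g h : K[X]) (n : ℕ) : Set K[X] :=
  {f | f.Monic ∧ Irreducible f ∧ f.natDegree = n ∧ Irreducible (ratTransform g h f)}

/-- `I(n,q) = (1/n) ∑_{d ∣ n} μ(d) q^{n/d}`, used formally for any rational `q`. -/
noncomputable def Ifun (n : ℕ) (q : ℚ) : ℚ :=
  (1 / (n : ℚ)) * ∑ d ∈ n.divisors, ((ArithmeticFunction.moebius d : ℤ) : ℚ) * q ^ (n / d)

/-- `I(n/m, q)` with the convention that it is `0` when `m` does not divide `n`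
(i.e. when `n/m` is not a positive integer). -/
noncomputable def IfunD (n m : ℕ) (q : ℚ) : ℚ := if m ∣ n then Ifun (n / m) q else 0

/-- `n₃`: the largest power of `3` dividing `n`. -/
def nThree (n : ℕ) : ℕ := 3 ^ (n.factorization 3)

/-
Let `g = X ^ p - σ X` in characteristic `p`. By Capelli's criterion `f ∘ g` is irreducible exactly
when a root `b` of it has degree `p` times that of `a = g(b)`, so it suffices to count such `b`.
The map `g` is additive and the `q`-Frobenius `φ` acts on its kernel as multiplication by a scalar
`ζ` with `ζ ^ (p - 1) = 1`, of order `r` say. If `a` has degree `d`, then `φ ^ d b - b` lies in the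
kernel, hence `φ ^ (d j) b - b` is that element times `∑ i < j, ζ ^ (d i)`, which decides the degree
of `b`: a degree jump by `p` forces `r ∣ d`, and conversely, for `r ∣ n`, if `a` but not `b` lies in
the field of degree `n` over `F`, then `b` has degree `d p` and `p ∤ n / d`. There are
`(p - 1) q ^ n` such `b`, so sorting them by `d` gives a divisor sum, and Möbius inversion isolates
the single degree wanted. A nonsquare `σ` in characteristic three gives `ζ = -1` and `r = 2`.
-/

lemma ncard_eq_ncard_mul_of_fibers {α β : Type*} {f : α → β} {s : Set α} {t : Set β} {k : ℕ}
    (hk : k ≠ 0) (hf : Set.MapsTo f s t) (hfiber : ∀ y ∈ t, {x ∈ s | f x = y}.ncard = k) :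
    s.ncard = t.ncard * k := by
  have fiberEquiv (y : t) : {x : s // hf.restrict f s t x = y} ≃ Fin k :=
    have hcard : Nat.card {x ∈ s | f x = y} = k := hfiber y y.2
    have : Finite {x ∈ s | f x = y} := Nat.finite_of_card_ne_zero (hcard ▸ hk)
    (((Equiv.subtypeEquivRight fun _ => Subtype.ext_iff).trans
      (Equiv.subtypeSubtypeEquivSubtypeInter (· ∈ s) fun x => f x = y)).trans
        (Finite.equivFinOfCardEq hcard))
  simpa [Nat.card_prod] using Nat.card_congr
    ((Equiv.sigmaFiberEquiv (hf.restrict f s t)).symm.trans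
      (Equiv.sigmaEquivProdOfEquiv fiberEquiv))

section Irreducibility

variable {F K : Type*} [Field F] [Field K] [Algebra F K]

lemma ratTransform_one_right (g f : F[X]) : ratTransform g 1 f = f.comp g := by
  simp [ratTransform, comp, eval₂_eq_sum_range]

lemma isIntegral_aeval {b : K} (hb : IsIntegral F b) (g : F[X]) : IsIntegral F (aeval b g) :=
  adjoin_le_integralClosure hb (aeval_mem_adjoin_singleton F b)

open IntermediateField in
lemma natDegree_minpoly_aeval_dvd (b : K) (g : F[X]) :
    (minpoly F (aeval b g)).natDegree ∣ (minpoly F b).natDegree := by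
  by_cases hb : IsIntegral F b
  · rw [← adjoin.finrank hb, ← adjoin.finrank (isIntegral_aeval hb g)]
    exact finrank_dvd_of_le_right (adjoin_simple_le_iff.2
      (algebra_adjoin_le_adjoin F _ (aeval_mem_adjoin_singleton F b)))
  · simp [minpoly.eq_zero hb]

lemma irreducible_minpoly_comp_iff {b : K} (hb : IsIntegral F b) {g : F[X]} :
    Irreducible ((minpoly F (aeval b g)).comp g) ↔
      (minpoly F b).natDegree = (minpoly F (aeval b g)).natDegree * g.natDegree := by
  have hdvd : minpoly F b ∣ (minpoly F (aeval b g)).comp g :=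
    minpoly.dvd _ _ (by rw [aeval_comp, minpoly.aeval])
  rw [← natDegree_comp]
  constructor
  · intro hirr
    have hassoc := (minpoly.irreducible hb).associated_of_dvd hirr hdvd
    exact (natDegree_le_of_dvd hdvd hirr.ne_zero).antisymm
      (natDegree_le_of_dvd hassoc.dvd' (minpoly.ne_zero hb))
  · intro hdeg
    have hne : (minpoly F (aeval b g)).comp g ≠ 0 := by
      rintro h
      simp [h, (minpoly.natDegree_pos hb).ne'] at hdeg
    exact (associated_of_dvd_of_natDegree_le hdvd hne hdeg.ge).irreducible (minpoly.irreducible hb)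

lemma separable_comp {f g : F[X]} (hf : f.Separable) (hg : IsUnit (derivative g)) :
    (f.comp g).Separable := by
  rw [separable_def, derivative_comp]
  exact (isCoprime_mul_unit_left_right hg _ _).2 (IsCoprime.map hf (compRingHom g))

lemma ncard_rootSet_eq_natDegree [IsAlgClosed K] {f : F[X]} (hf : f.Separable) :
    (f.rootSet K).ncard = f.natDegree := by
  rw [Set.ncard_eq_toFinset_card', Set.toFinset_card,
    card_rootSet_eq_natDegree hf (IsAlgClosed.splits _)]

/-- The points of `K` at which the cover `b ↦ g(b)` is inert: `g(b)` has degree `n` over `F` and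
the degree of `b` is larger by the full factor `g.natDegree`. They serve to count `IrredSet g 1 n`.
The degree over `F` is encoded as that of the minimal polynomial, which is `0` on non-integral
elements, so that the notion is meaningful for `n * g.natDegree ≠ 0`. -/
def inertPoints (K : Type*) [Field K] [Algebra F K] (g : F[X]) (n : ℕ) : Set K :=
  {b | (minpoly F (aeval b g)).natDegree = n ∧ (minpoly F b).natDegree = n * g.natDegree}

lemma minpoly_mem_irredSet_iff_mem_inertPoints {b : K} (hb : IsIntegral F b) {g : F[X]} {n : ℕ} :
    minpoly F (aeval b g) ∈ IrredSet g 1 n ↔ b ∈ inertPoints K g n := by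
  have hgb := isIntegral_aeval hb g
  simp only [IrredSet, inertPoints, Set.mem_ofPred_eq, ratTransform_one_right,
    irreducible_minpoly_comp_iff hb, minpoly.monic hgb, minpoly.irreducible hgb, true_and]
  exact and_congr_right fun h => h ▸ Iff.rfl

lemma ncard_inertPoints [PerfectField F] [IsAlgClosed K] {g : F[X]} {n : ℕ}
    (hn : n * g.natDegree ≠ 0) :
    (inertPoints K g n).ncard = (IrredSet g 1 n).ncard * (n * g.natDegree) := by
  refine ncard_eq_ncard_mul_of_fibers (f := fun b => minpoly F (aeval b g)) hn
    (fun b hb => ?_) fun f hf => ?_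
  · have hint : IsIntegral F b :=
      minpoly.ne_zero_iff.1 fun h => hn (by rw [← hb.2, h, natDegree_zero])
    exact (minpoly_mem_irredSet_iff_mem_inertPoints hint).2 hb
  obtain ⟨hmonic, hirr, hdeg, hcomp⟩ := id hf
  rw [ratTransform_one_right] at hcomp
  have hfiber : {b ∈ inertPoints K g n | minpoly F (aeval b g) = f} = (f.comp g).rootSet K := by
    ext b
    rw [mem_rootSet_of_ne hcomp.ne_zero]
    constructor
    · rintro ⟨-, rfl⟩
      rw [aeval_comp, minpoly.aeval]
    · intro hroot
      have hint : IsIntegral F b := IsAlgebraic.isIntegral ⟨_, hcomp.ne_zero, hroot⟩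
      have hmin : minpoly F (aeval b g) = f :=
        (minpoly.eq_of_irreducible_of_monic hirr (aeval_comp (R := F) b ▸ hroot) hmonic).symm
      exact ⟨(minpoly_mem_irredSet_iff_mem_inertPoints hint).1 (hmin ▸ hf), hmin⟩
  rw [hfiber, ncard_rootSet_eq_natDegree (PerfectField.separable_of_irreducible hcomp),
    natDegree_comp, hdeg]

end Irreducibility

section Frobenius

open FiniteField Function

variable {F K : Type*} [Field F] [Fintype F] [Field K] [Algebra F K]

lemma frobeniusAlgHom_iterate_apply (n : ℕ) (x : K) :
    (frobeniusAlgHom F K)^[n] x = x ^ Fintype.card F ^ n := by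
  rw [coe_frobeniusAlgHom, pow_iterate]

lemma aeval_X_pow_card_pow_sub_X_eq_zero_iff {n : ℕ} {x : K} :
    aeval x (X ^ Fintype.card F ^ n - X : F[X]) = 0 ↔ IsPeriodicPt (frobeniusAlgHom F K) n x := by
  simp [IsPeriodicPt, IsFixedPt, frobeniusAlgHom_iterate_apply, sub_eq_zero]

lemma natDegree_minpoly_dvd_iff_isPeriodicPt {n : ℕ} {x : K} :
    (minpoly F x).natDegree ∣ n ↔ IsPeriodicPt (frobeniusAlgHom F K) n x := by
  rcases eq_or_ne n 0 with rfl | hn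
  · simp [IsPeriodicPt, IsFixedPt]
  have hne := X_pow_card_pow_sub_X_ne_zero F hn (Fintype.one_lt_card (α := F))
  rw [← aeval_X_pow_card_pow_sub_X_eq_zero_iff]
  by_cases hx : IsIntegral F x
  · rw [(minpoly.irreducible hx).natDegree_dvd_iff_dvd_X_pow_card_pow_sub_X, minpoly.dvd_iff,
      Nat.card_eq_fintype_card]
  · rw [minpoly.eq_zero hx, natDegree_zero, zero_dvd_iff]
    exact iff_of_false hn fun h => hx (IsAlgebraic.isIntegral ⟨_, hne, h⟩)

lemma separable_X_pow_card_pow_sub_X {n : ℕ} (hn : n ≠ 0) :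
    (X ^ Fintype.card F ^ n - X : F[X]).Separable := by
  obtain ⟨k, -, hk⟩ := FiniteField.card F (ringChar F)
  exact galois_poly_separable (ringChar F) _
    (dvd_pow (hk ▸ dvd_pow_self _ k.ne_zero) hn)

variable (K)

lemma ncard_setOf_natDegree_minpoly_aeval_dvd [IsAlgClosed K] {g : F[X]}
    (hg : IsUnit (derivative g)) {n : ℕ} (hn : n ≠ 0) :
    {b : K | (minpoly F (aeval b g)).natDegree ∣ n}.ncard = Fintype.card F ^ n * g.natDegree := by
  have hsep := separable_comp (separable_X_pow_card_pow_sub_X (F := F) hn) hg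
  have hroots : {b : K | (minpoly F (aeval b g)).natDegree ∣ n} =
      ((X ^ Fintype.card F ^ n - X : F[X]).comp g).rootSet K := by
    ext b
    rw [mem_rootSet_of_ne hsep.ne_zero, aeval_comp, aeval_X_pow_card_pow_sub_X_eq_zero_iff,
      Set.mem_ofPred_eq, natDegree_minpoly_dvd_iff_isPeriodicPt]
  rw [hroots, ncard_rootSet_eq_natDegree hsep, natDegree_comp,
    X_pow_card_pow_sub_X_natDegree_eq F hn Fintype.one_lt_card]

lemma ncard_setOf_natDegree_minpoly_aeval_dvd_and_not_dvd [IsAlgClosed K] {g : F[X]}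
    (hg : IsUnit (derivative g)) {n : ℕ} (hn : n ≠ 0) :
    {b : K | (minpoly F (aeval b g)).natDegree ∣ n ∧ ¬ (minpoly F b).natDegree ∣ n}.ncard =
      Fintype.card F ^ n * (g.natDegree - 1) := by
  have hX := ncard_setOf_natDegree_minpoly_aeval_dvd K (F := F) (g := X) (by simp) hn
  simp only [aeval_X, natDegree_X, mul_one] at hX
  rw [Nat.mul_sub_one, ← ncard_setOf_natDegree_minpoly_aeval_dvd K hg hn, ← hX]
  have hfin : {b : K | (minpoly F b).natDegree ∣ n}.Finite :=
    Set.finite_of_ncard_ne_zero (hX ▸ pow_ne_zero _ Fintype.card_ne_zero)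
  exact Set.ncard_sdiff (fun b hb => (natDegree_minpoly_aeval_dvd b g).trans hb) hfin

end Frobenius

section AdditiveBinomial

open FiniteField Function

lemma iterate_mul_apply_eq_add_geom_sum_smul {R M : Type*} [CommRing R] [AddCommGroup M]
    [Module R M] (f : Module.End R M) {d : ℕ} {b c : M} {z : R} (hb : f^[d] b = b + c)
    (hc : f^[d] c = z • c) (j : ℕ) :
    f^[d * j] b = b + (∑ i ∈ Finset.range j, z ^ i) • c := by
  induction j with
  | zero => simp
  | succ j ih =>
    rw [mul_add_one, add_comm, iterate_add_apply, ih, ← Module.End.coe_pow, map_add, map_smul,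
      Module.End.coe_pow, hb, hc, geom_sum_succ]
    module

lemma geom_sum_eq_zero_iff {R : Type*} [CommRing R] [IsDomain R] (p : ℕ) [CharP R p] {z : R}
    {j : ℕ} :
    ∑ i ∈ Finset.range j, z ^ i = 0 ↔ z ^ j = 1 ∧ (z = 1 → p ∣ j) := by
  rcases eq_or_ne z 1 with rfl | hz
  · simp [CharP.cast_eq_zero_iff R p]
  · rw [← mul_right_inj' (sub_ne_zero.2 hz), mul_geom_sum, mul_zero, sub_eq_zero]
    simp [hz]

lemma natDegree_X_pow_sub_C_mul_X {R : Type*} [Ring R] [Nontrivial R] {n : ℕ} (hn : 1 < n)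
    (a : R) : (X ^ n - C a * X).natDegree = n := by
  have hlt : (C a * X).natDegree < (X ^ n : R[X]).natDegree := by
    rw [natDegree_X_pow]
    exact (natDegree_C_mul_le a X).trans_lt (by rwa [natDegree_X])
  rw [natDegree_sub_eq_left_of_natDegree_lt hlt, natDegree_X_pow]

lemma derivative_X_pow_char_sub_C_mul_X {R : Type*} [CommRing R] (p : ℕ) [CharP R p] (a : R) :
    derivative (X ^ p - C a * X) = C (-a) := by
  simp [derivative_X_pow]

variable {F K : Type*} [Field F] [Field K] [Algebra F K]

lemma aeval_sub_X_pow_char_sub_C_mul_X (p : ℕ) [Fact p.Prime] [CharP F p] (σ : F) (x y : K) :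
    aeval (x - y) (X ^ p - C σ * X : F[X]) =
      aeval x (X ^ p - C σ * X : F[X]) - aeval y (X ^ p - C σ * X : F[X]) := by
  have := charP_of_injective_algebraMap (algebraMap F K).injective p
  simp only [map_sub, map_mul, map_pow, aeval_X, aeval_C, sub_pow_char]
  ring

variable [Fintype F]

/-- The factor by which the Frobenius of `F` acts on the roots of `X ^ p - C σ * X` when `F` has
characteristic `p`. For `F` of order `p ^ k` the exponent is `1 + p + ⋯ + p ^ (k - 1)`, so this is
the norm of `σ` to the prime field. -/
def rootMultiplier (p : ℕ) (σ : F) : F := σ ^ ((Fintype.card F - 1) / (p - 1))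

lemma rootMultiplier_pow_sub_one (p : ℕ) [CharP F p] {σ : F} (hσ : σ ≠ 0) :
    rootMultiplier p σ ^ (p - 1) = 1 := by
  obtain ⟨k, -, hk⟩ := FiniteField.card F p
  rw [rootMultiplier, ← pow_mul, hk, Nat.div_mul_cancel (Nat.sub_one_dvd_pow_sub_one p k), ← hk]
  exact pow_card_sub_one_eq_one σ hσ

variable {p : ℕ} {σ : F}

lemma orderOf_rootMultiplier_dvd [CharP F p] (hσ : σ ≠ 0) :
    orderOf (rootMultiplier p σ) ∣ p - 1 :=
  orderOf_dvd_of_pow_eq_one (rootMultiplier_pow_sub_one p hσ)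

variable [Fact p.Prime] [CharP F p]

lemma orderOf_rootMultiplier_mul_pow_ne_zero (hσ : σ ≠ 0) (k : ℕ) :
    orderOf (rootMultiplier p σ) * p ^ k ≠ 0 :=
  have hp : p.Prime := Fact.out
  mul_ne_zero (ne_zero_of_dvd_ne_zero (Nat.sub_ne_zero_of_lt hp.one_lt)
    (orderOf_rootMultiplier_dvd hσ)) (pow_ne_zero k hp.ne_zero)

lemma coprime_orderOf_rootMultiplier_pow (hσ : σ ≠ 0) (k : ℕ) :
    (orderOf (rootMultiplier p σ)).Coprime (p ^ k) :=
  ((Nat.coprime_self_sub_left (Fact.out : p.Prime).one_le).2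
    (Nat.coprime_one_left p)).coprime_dvd_left (orderOf_rootMultiplier_dvd hσ) |>.pow_right k

lemma frobeniusAlgHom_apply_of_aeval_eq_zero {c : K}
    (hc : aeval c (X ^ p - C σ * X : F[X]) = 0) :
    frobeniusAlgHom F K c = rootMultiplier p σ • c := by
  have hp := (Fact.out : p.Prime).one_lt
  obtain ⟨k, -, hk⟩ := FiniteField.card F p
  rcases eq_or_ne c 0 with rfl | hc0
  · simp
  have hpow : c ^ (p - 1) = algebraMap F K σ := by
    have : c ^ p = algebraMap F K σ * c := by simpa [sub_eq_zero] using hc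
    apply mul_right_cancel₀ hc0
    rw [← this, pow_sub_one_mul (by omega)]
  have hdvd : p - 1 ∣ Fintype.card F - 1 := hk ▸ Nat.sub_one_dvd_pow_sub_one p k
  rw [coe_frobeniusAlgHom, rootMultiplier, Algebra.smul_def, map_pow, ← hpow, ← pow_mul,
    Nat.mul_div_cancel' hdvd, pow_sub_one_mul Fintype.card_ne_zero]

lemma frobeniusAlgHom_iterate_of_aeval_eq_zero {c : K}
    (hc : aeval c (X ^ p - C σ * X : F[X]) = 0) (d : ℕ) :
    (frobeniusAlgHom F K)^[d] c = rootMultiplier p σ ^ d • c := by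
  induction d with
  | zero => simp
  | succ d ih =>
    rw [iterate_succ_apply', ih, map_smul, frobeniusAlgHom_apply_of_aeval_eq_zero hc, smul_smul,
      pow_succ]

lemma natDegree_minpoly_dvd_mul_iff_or_geom_sum_eq_zero {b : K} {d : ℕ}
    (hd : (minpoly F (aeval b (X ^ p - C σ * X : F[X]))).natDegree ∣ d) (j : ℕ) :
    (minpoly F b).natDegree ∣ d * j ↔
      (minpoly F b).natDegree ∣ d ∨
        ∑ i ∈ Finset.range j, (rootMultiplier p σ ^ d) ^ i = 0 := by
  simp only [natDegree_minpoly_dvd_iff_isPeriodicPt] at hd ⊢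
  set φ := frobeniusAlgHom F K
  have hroot : aeval (φ^[d] b - b) (X ^ p - C σ * X : F[X]) = 0 := by
    have hcomm : Semiconj (fun x => aeval x (X ^ p - C σ * X : F[X])) φ φ :=
      fun x => aeval_algHom_apply φ x _
    rw [aeval_sub_X_pow_char_sub_C_mul_X, (hcomm.iterate_right d).eq b, hd.eq, sub_self]
  have hiter := iterate_mul_apply_eq_add_geom_sum_smul φ.toLinearMap
    (add_sub_cancel b (φ^[d] b)).symm (frobeniusAlgHom_iterate_of_aeval_eq_zero hroot d) j
  rw [AlgHom.coe_toLinearMap] at hiter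
  rw [IsPeriodicPt, IsFixedPt, hiter, add_eq_left, smul_eq_zero, sub_eq_zero, or_comm]
  rfl

lemma orderOf_dvd_of_mem_inertPoints (hσ : σ ≠ 0) {n : ℕ} (hn : n ≠ 0) {b : K}
    (hb : b ∈ inertPoints K (X ^ p - C σ * X) n) : orderOf (rootMultiplier p σ) ∣ n := by
  have hp := (Fact.out : p.Prime).one_lt
  obtain ⟨hgb, hdeg⟩ := hb
  rw [natDegree_X_pow_sub_C_mul_X hp] at hdeg
  by_contra hr
  have hne : rootMultiplier p σ ^ n ≠ 1 := mt orderOf_dvd_of_pow_eq_one hr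
  have hpow : (rootMultiplier p σ ^ n) ^ (p - 1) = 1 := by
    rw [pow_right_comm, rootMultiplier_pow_sub_one p hσ, one_pow]
  have hdvd := (natDegree_minpoly_dvd_mul_iff_or_geom_sum_eq_zero hgb.dvd (p - 1)).2
    (.inr ((geom_sum_eq_zero_iff p).2 ⟨hpow, fun h => absurd h hne⟩))
  rw [hdeg, Nat.mul_dvd_mul_iff_left (Nat.pos_of_ne_zero hn)] at hdvd
  exact absurd (Nat.le_of_dvd (by omega) hdvd) (by omega)

lemma dvd_and_not_dvd_iff_exists_mem_inertPoints {n : ℕ} (hn : n ≠ 0)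
    (hr : orderOf (rootMultiplier p σ) ∣ n) {b : K} :
    (minpoly F (aeval b (X ^ p - C σ * X : F[X]))).natDegree ∣ n ∧
        ¬ (minpoly F b).natDegree ∣ n ↔
      ∃ d j, d * j = n ∧ ¬ p ∣ j ∧ b ∈ inertPoints K (X ^ p - C σ * X : F[X]) d := by
  have hp : p.Prime := Fact.out
  simp only [inertPoints, natDegree_X_pow_sub_C_mul_X hp.one_lt, Set.mem_ofPred_eq]
  constructor
  · rintro ⟨⟨j, rfl⟩, hndvd⟩
    set d := (minpoly F (aeval b (X ^ p - C σ * X : F[X]))).natDegree with hd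
    have hd0 : d ≠ 0 := left_ne_zero_of_mul hn
    have hpow : (rootMultiplier p σ ^ d) ^ j = 1 := by
      rw [← pow_mul, orderOf_dvd_iff_pow_eq_one.1 hr]
    rw [natDegree_minpoly_dvd_mul_iff_or_geom_sum_eq_zero hd.symm.dvd,
      geom_sum_eq_zero_iff p] at hndvd
    push Not at hndvd
    obtain ⟨hnd, hsum⟩ := hndvd
    obtain ⟨hone, hpj⟩ := hsum hpow
    have hdp : (minpoly F b).natDegree ∣ d * p :=
      (natDegree_minpoly_dvd_mul_iff_or_geom_sum_eq_zero hd.symm.dvd p).2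
        (.inr ((geom_sum_eq_zero_iff p).2 ⟨by rw [hone, one_pow], fun _ => dvd_rfl⟩))
    obtain ⟨m, hm⟩ := natDegree_minpoly_aeval_dvd b (X ^ p - C σ * X : F[X])
    rw [hm, Nat.mul_dvd_mul_iff_left (Nat.pos_of_ne_zero hd0)] at hdp
    have hm1 : m ≠ 1 := by
      rintro rfl
      exact hnd (by rw [hm, mul_one])
    exact ⟨d, j, rfl, hpj, rfl, ((Nat.dvd_prime hp).1 hdp).resolve_left hm1 ▸ hm⟩
  · rintro ⟨d, j, rfl, hpj, rfl, hdeg⟩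
    refine ⟨dvd_mul_right _ _, fun h => hpj ?_⟩
    rwa [hdeg, Nat.mul_dvd_mul_iff_left (Nat.pos_of_ne_zero (left_ne_zero_of_mul hn))] at h

lemma setOf_dvd_and_not_dvd_eq_biUnion_inertPoints (hσ : σ ≠ 0) {k M e : ℕ}
    (hM : orderOf (rootMultiplier p σ) * p ^ k = M) (he : ¬ p ∣ e) :
    {b : K | (minpoly F (aeval b (X ^ p - C σ * X : F[X]))).natDegree ∣ M * e ∧
        ¬ (minpoly F b).natDegree ∣ M * e} =
      ⋃ i ∈ e.divisors, inertPoints K (X ^ p - C σ * X) (M * i) := by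
  have hp : p.Prime := Fact.out
  have he0 : e ≠ 0 := fun h => he (h ▸ dvd_zero p)
  have hM0 : M ≠ 0 := hM ▸ orderOf_rootMultiplier_mul_pow_ne_zero hσ k
  have hMe : M * e ≠ 0 := mul_ne_zero hM0 he0
  have hr : orderOf (rootMultiplier p σ) ∣ M * e := (hM ▸ dvd_mul_right _ _).mul_right e
  ext b
  rw [Set.mem_ofPred_eq, dvd_and_not_dvd_iff_exists_mem_inertPoints hMe hr]
  simp only [Set.mem_iUnion, Nat.mem_divisors, exists_prop]
  constructor
  · rintro ⟨d, j, hdj, hpj, hb⟩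
    have hrd : orderOf (rootMultiplier p σ) ∣ d :=
      orderOf_dvd_of_mem_inertPoints hσ (left_ne_zero_of_mul (hdj ▸ hMe)) hb
    have hpd : p ^ k ∣ d :=
      (((hp.coprime_iff_not_dvd).2 hpj).pow_left k).dvd_of_dvd_mul_right
        (hdj ▸ (hM ▸ dvd_mul_left _ _).mul_right e)
    obtain ⟨i, rfl⟩ : M ∣ d :=
      hM ▸ (coprime_orderOf_rootMultiplier_pow hσ k).mul_dvd_of_dvd_of_dvd hrd hpd
    rw [mul_assoc, Nat.mul_right_inj hM0] at hdj
    exact ⟨i, ⟨⟨j, hdj.symm⟩, he0⟩, hb⟩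
  · rintro ⟨i, ⟨⟨j, rfl⟩, -⟩, hb⟩
    exact ⟨M * i, j, mul_assoc _ _ _, fun h => he (h.mul_left _), hb⟩

variable [IsAlgClosed K]

lemma sum_divisors_ncard_inertPoints (hσ : σ ≠ 0) {k M e : ℕ}
    (hM : orderOf (rootMultiplier p σ) * p ^ k = M) (he : ¬ p ∣ e) :
    ∑ i ∈ e.divisors, (inertPoints K (X ^ p - C σ * X) (M * i)).ncard =
      Fintype.card F ^ (M * e) * (p - 1) := by
  have hp : p.Prime := Fact.out
  have hM0 : M ≠ 0 := hM ▸ orderOf_rootMultiplier_mul_pow_ne_zero hσ k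
  have hunit : IsUnit (derivative (X ^ p - C σ * X)) := by
    rw [derivative_X_pow_char_sub_C_mul_X]
    exact isUnit_C.2 (neg_ne_zero.2 hσ).isUnit
  have he0 : e ≠ 0 := fun h => he (h ▸ dvd_zero p)
  have hcard := ncard_setOf_natDegree_minpoly_aeval_dvd_and_not_dvd K hunit (mul_ne_zero hM0 he0)
  rw [natDegree_X_pow_sub_C_mul_X hp.one_lt,
    setOf_dvd_and_not_dvd_eq_biUnion_inertPoints hσ hM he] at hcard
  have hfin := Set.finite_of_ncard_ne_zero (hcard ▸ mul_ne_zero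
    (pow_ne_zero _ Fintype.card_ne_zero) (Nat.sub_ne_zero_of_lt hp.one_lt))
  rw [← hcard, ← finsum_mem_coe_finset]
  refine (Set.Finite.ncard_biUnion (Finset.finite_toSet _) (fun i hi => ?_) ?_).symm
  · exact hfin.subset (Set.subset_biUnion_of_mem (u := fun i => inertPoints K _ (M * i)) hi)
  · intro i _ j _ hij
    refine Set.disjoint_left.2 fun b hi hj => hij ?_
    exact (Nat.mul_right_inj hM0).1 (hi.1.symm.trans hj.1)

end AdditiveBinomial

lemma eq_mul_ifun_of_sum_divisors_eq {s : Set ℕ} (hs : ∀ m n, m ∣ n → n ∈ s → m ∈ s)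
    {h : ℕ → ℚ} {c Q : ℚ} (hsum : ∀ n ∈ s, n ≠ 0 → ∑ i ∈ n.divisors, h i = c * Q ^ n) {n : ℕ}
    (hn : n ∈ s) (hn0 : n ≠ 0) : h n = c * (n * Ifun n Q) := by
  have hmoebius := (ArithmeticFunction.sum_eq_iff_sum_mul_moebius_eq_on s hs).1
    (fun m hm hms => hsum m hms hm.ne') n (Nat.pos_of_ne_zero hn0) hn
  rw [← hmoebius, Ifun, Nat.sum_divisorsAntidiagonal fun i j =>
    ((ArithmeticFunction.moebius i : ℤ) : ℚ) * (c * Q ^ j)]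
  field_simp
  rw [Finset.mul_sum]
  exact Finset.sum_congr rfl fun _ _ => by ring

section Count

variable {F : Type*} [Field F] [Fintype F] {p : ℕ} [Fact p.Prime] [CharP F p] {σ : F}

lemma ncard_irredSet_eq_zero_of_not_orderOf_dvd (hσ : σ ≠ 0) {n : ℕ}
    (hn : ¬ orderOf (rootMultiplier p σ) ∣ n) :
    (IrredSet (X ^ p - C σ * X) 1 n).ncard = 0 := by
  have hp : p.Prime := Fact.out
  have hn0 : n ≠ 0 := fun h => hn (h ▸ dvd_zero _)
  have hdeg : n * (X ^ p - C σ * X).natDegree ≠ 0 := by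
    rw [natDegree_X_pow_sub_C_mul_X hp.one_lt]
    exact mul_ne_zero hn0 hp.ne_zero
  have hempty : inertPoints (AlgebraicClosure F) (X ^ p - C σ * X) n = ∅ :=
    Set.eq_empty_of_forall_notMem fun b hb => hn (orderOf_dvd_of_mem_inertPoints hσ hn0 hb)
  have hcard := ncard_inertPoints (K := AlgebraicClosure F) hdeg
  rw [hempty, Set.ncard_empty, zero_eq_mul] at hcard
  exact hcard.resolve_right hdeg

lemma ncard_irredSet_mul_of_not_dvd (hσ : σ ≠ 0) {k M m : ℕ}
    (hM : orderOf (rootMultiplier p σ) * p ^ k = M) (hm : ¬ p ∣ m) :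
    ((IrredSet (X ^ p - C σ * X) 1 (M * m)).ncard : ℚ) =
      ((p : ℚ) - 1) / (p * M) * Ifun m ((Fintype.card F : ℚ) ^ M) := by
  have hp : p.Prime := Fact.out
  have hM0 : M ≠ 0 := hM ▸ orderOf_rootMultiplier_mul_pow_ne_zero hσ k
  have hm0 : m ≠ 0 := fun h => hm (h ▸ dvd_zero p)
  have hsum (e : ℕ) (he : ¬ p ∣ e) : ∑ i ∈ e.divisors,
      ((inertPoints (AlgebraicClosure F) (X ^ p - C σ * X) (M * i)).ncard : ℚ) =
        ((p : ℚ) - 1) * ((Fintype.card F : ℚ) ^ M) ^ e := by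
    rw [← Nat.cast_sum, sum_divisors_ncard_inertPoints hσ hM he, Nat.cast_mul,
      Nat.cast_pred hp.pos, Nat.cast_pow, pow_mul, mul_comm]
  have hinert := eq_mul_ifun_of_sum_divisors_eq (s := {e | ¬ p ∣ e})
    (fun i j hij hj hi => hj (hi.trans hij)) (fun e he _ => hsum e he) hm hm0
  rw [ncard_inertPoints (by simp [natDegree_X_pow_sub_C_mul_X hp.one_lt, hM0, hm0, hp.ne_zero]),
    natDegree_X_pow_sub_C_mul_X hp.one_lt] at hinert
  push_cast at hinert
  have hpQ : (p : ℚ) ≠ 0 := mod_cast hp.ne_zero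
  have hMQ : (M : ℚ) ≠ 0 := mod_cast hM0
  have hmQ : (m : ℚ) ≠ 0 := mod_cast hm0
  field_simp
  refine mul_right_cancel₀ hmQ ?_
  linear_combination hinert

end Count

lemma orderOf_rootMultiplier_three_of_not_isSquare {F : Type*} [Field F] [Fintype F]
    [CharP F 3] {σ : F} (hσ : ¬ IsSquare σ) : orderOf (rootMultiplier 3 σ) = 2 := by
  have hσ0 : σ ≠ 0 := fun h => hσ (h ▸ IsSquare.zero)
  have hchar : ringChar F ≠ 2 := by
    rw [ringChar.eq F 3]
    decide
  have hodd := FiniteField.odd_card_of_char_ne_two hchar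
  refine orderOf_eq_prime (rootMultiplier_pow_sub_one 3 hσ0) fun h => hσ ?_
  have hhalf : Fintype.card F / 2 = (Fintype.card F - 1) / 2 := by omega
  rwa [FiniteField.isSquare_iff hchar hσ0, hhalf]

theorem stmt14_general {F : Type*} [Field F] [Fintype F] (p : ℕ) [Fact p.Prime] [CharP F p]
    {σ : F} (hσ : σ ≠ 0) {r P n : ℕ} (hr : orderOf (rootMultiplier p σ) = r)
    (hP : p ^ n.factorization p = P) (hn : n ≠ 0) :
    ((IrredSet (X ^ p - C σ * X) 1 n).ncard : ℚ) =
        ((p : ℚ) - 1) / (p * (r * P)) * IfunD n (r * P) ((Fintype.card F : ℚ) ^ (r * P)) ∧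
      (¬ r ∣ n / P → (IrredSet (X ^ p - C σ * X) 1 n).ncard = 0) := by
  have hPn : P ∣ n := hP ▸ Nat.ordProj_dvd n p
  have hcop : r.Coprime P := hr ▸ hP ▸ coprime_orderOf_rootMultiplier_pow hσ _
  have hzero (h : ¬ r * P ∣ n) : (IrredSet (X ^ p - C σ * X) 1 n).ncard = 0 :=
    ncard_irredSet_eq_zero_of_not_orderOf_dvd hσ fun hrn =>
      h (hcop.mul_dvd_of_dvd_of_dvd (hr ▸ hrn) hPn)
  refine ⟨?_, fun h => hzero fun hdvd => h ?_⟩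
  · rw [IfunD]
    split_ifs with hdvd
    · obtain ⟨m, rfl⟩ := hdvd
      have hrP : r * P ≠ 0 := left_ne_zero_of_mul hn
      have hm : ¬ p ∣ m := fun h => Nat.not_dvd_ordCompl Fact.out hn <| by
        rw [hP, mul_right_comm,
          Nat.mul_div_cancel _ (Nat.pos_of_ne_zero (right_ne_zero_of_mul hrP))]
        exact h.mul_left r
      have hM : orderOf (rootMultiplier p σ) * p ^ (r * P * m).factorization p = r * P := by
        rw [hr, hP]
      rw [Nat.mul_div_cancel_left m (Nat.pos_of_ne_zero hrP),
        ncard_irredSet_mul_of_not_dvd hσ hM hm, Nat.cast_mul]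
    · rw [hzero hdvd, Nat.cast_zero, mul_zero]
  · rwa [Nat.dvd_div_iff_mul_dvd hPn, mul_comm]

/-- Theorem 14: over `F_q` of characteristic three, for a nonsquare `σ`,
`|𝓘(x³−σx, 1, n, q)| = (1/(3n₃)) I(n/(2n₃), q^{2n₃})`; in particular it vanishes
when `n/n₃` is odd. -/
theorem stmt14 {F : Type*} [Field F] [Fintype F] (q : ℕ) (hq : Fintype.card F = q)
    (hchar : ringChar F = 3) (σ : F) (hσ : ¬ IsSquare σ) (n : ℕ) (hn : 1 < n) :
    ((IrredSet (X ^ 3 - C σ * X) 1 n).ncard : ℚ) =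
        (1 / (3 * (nThree n : ℚ))) * IfunD n (2 * nThree n) ((q : ℚ) ^ (2 * nThree n)) ∧
      (Odd (n / nThree n) → (IrredSet (X ^ 3 - C σ * X) 1 n).ncard = 0) := by
  have := Fact.mk Nat.prime_three
  have : CharP F 3 := ringChar.of_eq hchar
  have hσ0 : σ ≠ 0 := fun h => hσ (h ▸ IsSquare.zero)
  obtain ⟨hcard, hzero⟩ := stmt14_general 3 hσ0 (orderOf_rootMultiplier_three_of_not_isSquare hσ)
    (rfl : _ = nThree n) (by omega)
  refine ⟨?_, fun hodd => hzero hodd.not_two_dvd_nat⟩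
  rw [hcard, hq]
  congr 1
  push_cast
  ring
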